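/- Let φ : ℝⁿ → ℝⁿ be an L-bi-Lipschitz bijection and let U ⊆ ℝⁿ be a set of finite perimeter. Then φ(U) is a set of finite perimeter; moreover Lⁿ(φ(U)) ≤ Lⁿ · Lⁿ(U) (the first Lⁿ a power of L, the others Lebesgue measure) and H^{n−1}(∂*(φ(U))) ≤ L^{n−1} · H^{n−1}(∂*U). -/

import Mathlib

/-!
Lebesgue measure on `ℝⁿ` is a constant multiple of the `n`-dimensional Hausdorff measure, so an
`L`-Lipschitz map increases it by a factor of at most `Lⁿ` (`volume_image_le`).  Since `φ`
does not shrink distances by more than `L`, `φ(U) ∩ B(φ x, r) ⊆ φ(U ∩ B(x, L r))`; together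
with the scaling of balls this bounds the density quotient of `φ(U)` at `φ x` and radius `r` by
`L²ⁿ` times that of `U` at `x` and radius `L r`.  Hence `φ` carries points of density `0` of `U` to
points of density `0` of `φ(U)` (`hasDensity_zero_image`), and, since the bijection `φ` commutes
with complements, the same is
true of density `1`.  As `φ` is onto, `∂*(φ(U)) ⊆ φ(∂*U)`, and the Lipschitz bound for `H^{n-1}` gives the
estimate.  For `n = 0`, where the Hausdorff dimension `n - 1` is negative, essential boundaries are
empty.
-/

open MeasureTheory Metric Set Filter Topology
open scoped ENNReal

/-- The set `U` has density `d` at the point `x`:  the ratio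
`Lⁿ(U ∩ B(x,r)) / Lⁿ(B(x,r))` tends to `d` as `r → 0⁺`. -/
def HasDensity {n : ℕ} (U : Set (EuclideanSpace ℝ (Fin n)))
    (x : EuclideanSpace ℝ (Fin n)) (d : ℝ≥0∞) : Prop :=
  Tendsto (fun r : ℝ => volume (U ∩ ball x r) / volume (ball x r)) (𝓝[>] 0) (𝓝 d)

/-- The essential (measure-theoretic) boundary of `U`: the set of points `x` where the
density of `U` neither (exists and equals `0`) nor (exists and equals `1`). -/
def essentialBoundary {n : ℕ} (U : Set (EuclideanSpace ℝ (Fin n))) :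
    Set (EuclideanSpace ℝ (Fin n)) :=
  {x | ¬ HasDensity U x 0 ∧ ¬ HasDensity U x 1}

/-- A Borel set `U ⊆ ℝⁿ` has finite perimeter if it has finite Lebesgue measure and its
essential boundary has finite `(n−1)`-dimensional Hausdorff measure. -/
def HasFinitePerimeter {n : ℕ} (U : Set (EuclideanSpace ℝ (Fin n))) : Prop :=
  MeasurableSet U ∧ volume U < ⊤ ∧ μH[(n : ℝ) - 1] (essentialBoundary U) < ⊤

lemma volume_image_le {n : ℕ} {L : ℝ} (hL : 0 < L)
    {φ : EuclideanSpace ℝ (Fin n) → EuclideanSpace ℝ (Fin n)}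
    (hlip : LipschitzWith L.toNNReal φ) (s : Set (EuclideanSpace ℝ (Fin n))) :
    volume (φ '' s) ≤ ENNReal.ofReal (L ^ n) * volume s := by
  have hH : Measure.IsAddHaarMeasure (μH[(n : ℝ)] : Measure (EuclideanSpace ℝ (Fin n))) := by
    have h := isAddHaarMeasure_hausdorffMeasure (E := EuclideanSpace ℝ (Fin n))
    rwa [finrank_euclideanSpace_fin] at h
  have key := hlip.hausdorffMeasure_image_le (d := (n : ℝ)) (Nat.cast_nonneg n) s
  rw [Measure.isAddLeftInvariant_eq_smul (volume : Measure (EuclideanSpace ℝ (Fin n)))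
    (μH[(n : ℝ)])]
  simp only [Measure.smul_apply, ENNReal.smul_def, smul_eq_mul]
  rw [ENNReal.ofReal_pow hL.le, mul_left_comm]
  gcongr
  rw [ENNReal.rpow_natCast] at key
  exact key

/-- The density quotient of `φ '' U` at `φ x` and radius `r` is at most `L ^ (2 * n)` times that of
`U` at `x` and radius `L * r`. -/
lemma hasDensity_zero_image {n : ℕ} {L : ℝ} (hL : 0 < L)
    {φ : EuclideanSpace ℝ (Fin n) → EuclideanSpace ℝ (Fin n)}
    (hlip : LipschitzWith L.toNNReal φ)
    (hbl : ∀ x y : EuclideanSpace ℝ (Fin n), (1 / L) * ‖x - y‖ ≤ ‖φ x - φ y‖)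
    {U : Set (EuclideanSpace ℝ (Fin n))} {x : EuclideanSpace ℝ (Fin n)}
    (h : HasDensity U x 0) : HasDensity (φ '' U) (φ x) 0 := by
  unfold HasDensity at h ⊢
  have hscale : Tendsto (fun r : ℝ => L * r) (𝓝[>] 0) (𝓝[>] 0) := by
    refine tendsto_nhdsWithin_iff.2 ⟨?_, ?_⟩
    · have : Tendsto (fun r : ℝ => L * r) (𝓝 0) (𝓝 (L * 0)) :=
        (continuous_const.mul continuous_id).tendsto 0
      rw [mul_zero] at this
      exact this.mono_left nhdsWithin_le_nhds
    · filter_upwards [self_mem_nhdsWithin] with r hr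
      exact mul_pos hL hr
  have hlim := ENNReal.Tendsto.const_mul (a := ENNReal.ofReal (L ^ n) * ENNReal.ofReal (L ^ n))
    (h.comp hscale) (Or.inr (ENNReal.mul_ne_top ENNReal.ofReal_ne_top ENNReal.ofReal_ne_top))
  rw [mul_zero] at hlim
  refine tendsto_of_tendsto_of_tendsto_of_le_of_le' tendsto_const_nhds hlim
    (Eventually.of_forall fun _ => zero_le) ?_
  filter_upwards [self_mem_nhdsWithin] with r hr
  have hr : 0 < r := hr
  have hsub : φ '' U ∩ ball (φ x) r ⊆ φ '' (U ∩ ball x (L * r)) := by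
    rintro _ ⟨⟨u, hu, rfl⟩, hb⟩
    refine ⟨u, ⟨hu, ?_⟩, rfl⟩
    rw [mem_ball, dist_eq_norm] at hb ⊢
    have := (hbl u x).trans_lt hb
    rwa [one_div, inv_mul_lt_iff₀ hL] at this
  have hball : volume (ball x (L * r)) = ENNReal.ofReal (L ^ n) * volume (ball (φ x) r) := by
    rw [Measure.addHaar_ball_mul_of_pos _ _ hL, finrank_euclideanSpace_fin,
      Measure.addHaar_ball_center volume (φ x)]
  have hc0 : ENNReal.ofReal (L ^ n) ≠ 0 := by
    simpa using pow_pos hL n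
  have hquot : ENNReal.ofReal (L ^ n) * (volume (U ∩ ball x (L * r)) / volume (ball x (L * r)))
      = volume (U ∩ ball x (L * r)) / volume (ball (φ x) r) := by
    rw [hball, ← mul_div_assoc]
    exact ENNReal.mul_div_mul_left _ _ hc0 ENNReal.ofReal_ne_top
  simp only [Function.comp_apply]
  rw [mul_assoc, hquot, ← mul_div_assoc]
  gcongr
  exact (measure_mono hsub).trans (volume_image_le hL hlip _)

lemma hasDensity_one_iff_compl {n : ℕ} {U : Set (EuclideanSpace ℝ (Fin n))}
    (hU : MeasurableSet U) (x : EuclideanSpace ℝ (Fin n)) :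
    HasDensity U x 1 ↔ HasDensity Uᶜ x 0 := by
  have hsum : ∀ r : ℝ, 0 < r → volume (U ∩ ball x r) / volume (ball x r) +
      volume (Uᶜ ∩ ball x r) / volume (ball x r) = 1 := by
    intro r hr
    rw [← ENNReal.add_div, inter_comm U, inter_comm Uᶜ, ← sdiff_eq, measure_inter_add_sdiff _ hU]
    exact ENNReal.div_self (measure_ball_pos _ _ hr).ne' measure_ball_lt_top.ne
  unfold HasDensity
  constructor
  · intro h
    have h' := ENNReal.Tendsto.sub (tendsto_const_nhds (x := (1 : ℝ≥0∞))) h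
      (Or.inl ENNReal.one_ne_top)
    rw [tsub_self] at h'
    refine h'.congr' ?_
    filter_upwards [self_mem_nhdsWithin] with r hr
    have hs := hsum r hr
    refine ENNReal.sub_eq_of_eq_add ?_ ((add_comm _ _).trans hs).symm
    exact ne_top_of_le_ne_top ENNReal.one_ne_top (hs ▸ le_self_add)
  · intro h
    have h' := ENNReal.Tendsto.sub (tendsto_const_nhds (x := (1 : ℝ≥0∞))) h
      (Or.inl ENNReal.one_ne_top)
    rw [tsub_zero] at h'
    refine h'.congr' ?_
    filter_upwards [self_mem_nhdsWithin] with r hr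
    have hs := hsum r hr
    refine ENNReal.sub_eq_of_eq_add ?_ hs.symm
    exact ne_top_of_le_ne_top ENNReal.one_ne_top (hs ▸ le_add_self)

lemma essentialBoundary_dim_zero (U : Set (EuclideanSpace ℝ (Fin 0))) :
    essentialBoundary U = ∅ := by
  have hempty : ∀ x : EuclideanSpace ℝ (Fin 0), HasDensity ∅ x 0 := fun x => by
    simp [HasDensity]
  refine eq_empty_of_forall_notMem fun x hx => ?_
  rcases Subsingleton.eq_empty_or_singleton (subsingleton_of_subsingleton (s := U)) with h | ⟨y, h⟩
  · exact hx.1 (h ▸ hempty x)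
  · have hu : U = univ := h ▸ eq_univ_of_forall fun z => Subsingleton.elim z y
    refine hx.2 ((hasDensity_one_iff_compl (hu ▸ MeasurableSet.univ) x).2 ?_)
    rw [hu, compl_univ]
    exact hempty x

/-- **Configurations preserve bodies.**  The image of a set of finite perimeter under an
`L`-bi-Lipschitz bijection `φ : ℝⁿ → ℝⁿ` is a set of finite perimeter; moreover
`Lⁿ(φ(U)) ≤ Lⁿ·Lⁿ(U)` and `H^{n−1}(∂*(φ(U))) ≤ L^{n−1}·H^{n−1}(∂*U)`. -/
theorem finitePerimeter_image_biLipschitz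
    (n : ℕ) (L : ℝ) (hL : 0 < L)
    (φ : EuclideanSpace ℝ (Fin n) → EuclideanSpace ℝ (Fin n))
    (hbij : Function.Bijective φ)
    (hbl : ∀ x y : EuclideanSpace ℝ (Fin n),
      (1 / L) * ‖x - y‖ ≤ ‖φ x - φ y‖ ∧ ‖φ x - φ y‖ ≤ L * ‖x - y‖)
    (U : Set (EuclideanSpace ℝ (Fin n))) (hU : HasFinitePerimeter U) :
    HasFinitePerimeter (φ '' U) ∧
    volume (φ '' U) ≤ ENNReal.ofReal (L ^ n) * volume U ∧
    μH[(n : ℝ) - 1] (essentialBoundary (φ '' U)) ≤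
      ENNReal.ofReal (L ^ (n - 1)) * μH[(n : ℝ) - 1] (essentialBoundary U) := by
  obtain ⟨hUm, hUv, hUb⟩ := hU
  have hlip : LipschitzWith L.toNNReal φ := LipschitzWith.of_dist_le_mul fun x y => by
    rw [dist_eq_norm, dist_eq_norm, Real.coe_toNNReal _ hL.le]
    exact (hbl x y).2
  have hlow := fun x y => (hbl x y).1
  have himg : MeasurableSet (φ '' U) :=
    hUm.image_of_continuousOn_injOn hlip.continuous.continuousOn hbij.1.injOn
  have hvol := volume_image_le hL hlip U
  have hbd : μH[(n : ℝ) - 1] (essentialBoundary (φ '' U)) ≤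
      ENNReal.ofReal (L ^ (n - 1)) * μH[(n : ℝ) - 1] (essentialBoundary U) := by
    rcases Nat.eq_zero_or_pos n with rfl | hn
    · simp [essentialBoundary_dim_zero]
    have hsub : essentialBoundary (φ '' U) ⊆ φ '' essentialBoundary U := by
      intro y hy
      obtain ⟨x, rfl⟩ := hbij.2 y
      refine ⟨x, ⟨fun h0 => hy.1 (hasDensity_zero_image hL hlip hlow h0), fun h1 => hy.2 ?_⟩, rfl⟩
      rw [hasDensity_one_iff_compl himg, ← image_compl_eq hbij]
      exact hasDensity_zero_image hL hlip hlow ((hasDensity_one_iff_compl hUm x).1 h1)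
    have hcast : (n : ℝ) - 1 = ((n - 1 : ℕ) : ℝ) := by
      rw [Nat.cast_sub hn, Nat.cast_one]
    rw [hcast]
    refine (measure_mono hsub).trans ((hlip.hausdorffMeasure_image_le
      (Nat.cast_nonneg (n - 1)) (essentialBoundary U)).trans_eq ?_)
    rw [ENNReal.rpow_natCast, ENNReal.ofReal_pow hL.le]
    rfl
  exact ⟨⟨himg, hvol.trans_lt (ENNReal.mul_lt_top ENNReal.ofReal_lt_top hUv),
    hbd.trans_lt (ENNReal.mul_lt_top ENNReal.ofReal_lt_top hUb)⟩, hvol, hbd⟩
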